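/- Let p and q be distinct primes, H a finite abelian p-group, and m a positive integer. Then k(H ⊕ C_{q^m}) = k(H) + 1 − 1/q^m. -/

import Mathlib

/-- The cross number `k(S)` of a sequence (finite multiset) `S` over an additive group:
the sum, with multiplicity, of the reciprocals of the orders of its elements. -/
noncomputable def crossNum {G : Type*} [AddCommGroup G] (S : Multiset G) : ℝ :=
  (S.map fun g => ((addOrderOf g : ℝ))⁻¹).sum

/-- `S` is zero-sum free: no nonempty sub-multiset of `S` has sum `0`. -/
def IsZeroSumFree {G : Type*} [AddCommGroup G] (S : Multiset G) : Prop :=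
  ∀ T : Multiset G, T ≤ S → T ≠ 0 → T.sum ≠ 0

/-- The little cross number `k(G)`: the maximal cross number of a zero-sum free
sequence over `G`. -/
noncomputable def littleK (G : Type*) [AddCommGroup G] : ℝ :=
  sSup {x : ℝ | ∃ S : Multiset G, IsZeroSumFree S ∧ crossNum S = x}
open Finset

section PartA

variable {K : Type*} [Field K] {H : Type*} [AddCommGroup H] {ι : Type*} [Fintype ι]

/-- The weight filtration on the group algebra. -/
noncomputable def wIdeal (K : Type*) [Field K] {H : Type*} [AddCommGroup H]
    {ι : Type*} [Fintype ι] (e : ι → H) (N : ι → ℕ) (w : ℝ) : Ideal (AddMonoidAlgebra K H) :=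
  Ideal.span {x | ∃ k : ι → ℕ, w ≤ ∑ i, (k i : ℝ) / N i ∧
    x = ∏ i, (1 - AddMonoidAlgebra.single (e i) (1 : K)) ^ k i}

lemma wIdeal_zero (e : ι → H) (N : ι → ℕ) (x : AddMonoidAlgebra K H) : x ∈ wIdeal K e N 0 := by
  have : (1 : AddMonoidAlgebra K H) ∈ wIdeal K e N 0 :=
    Ideal.subset_span ⟨fun _ => 0, by simp, by simp⟩
  rw [(Ideal.eq_top_iff_one _).2 this]; trivial

lemma wIdeal_mul (e : ι → H) (N : ι → ℕ) {a b : ℝ} {x y : AddMonoidAlgebra K H}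
    (hx : x ∈ wIdeal K e N a) (hy : y ∈ wIdeal K e N b) : x * y ∈ wIdeal K e N (a + b) := by
  have h := Ideal.mul_mem_mul hx hy
  unfold wIdeal at h
  rw [Ideal.span_mul_span'] at h
  refine Ideal.span_mono ?_ h
  rintro _ ⟨_, ⟨k, hk, rfl⟩, _, ⟨l, hl, rfl⟩, rfl⟩
  refine ⟨k + l, ?_, ?_⟩
  · simp only [Pi.add_apply, Nat.cast_add, add_div, sum_add_distrib]
    linarith
  · simp only [Pi.add_apply, pow_add, prod_mul_distrib]

lemma charP_groupAlgebra (p : ℕ) [CharP K p] : CharP (AddMonoidAlgebra K H) p :=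
  charP_of_injective_algebraMap (FaithfulSMul.algebraMap_injective K (AddMonoidAlgebra K H)) p

lemma one_sub_single_pow (p : ℕ) [Fact p.Prime] [CharP K p] (h : H) (n : ℕ) :
    (1 - AddMonoidAlgebra.single h (1 : K)) ^ p ^ n
      = 1 - AddMonoidAlgebra.single (p ^ n • h) (1 : K) := by
  have := charP_groupAlgebra (K := K) (H := H) p
  rw [sub_pow_char_pow, AddMonoidAlgebra.single_pow]; simp

lemma wIdeal_eq_zero (p : ℕ) [Fact p.Prime] [CharP K p] (e : ι → H) (n : ι → ℕ)
    (he : ∀ i, p ^ n i • e i = 0) {w : ℝ}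
    (hw : ∑ i, (1 - ((p ^ n i : ℕ) : ℝ)⁻¹) < w) {x : AddMonoidAlgebra K H}
    (hx : x ∈ wIdeal K e (fun i => p ^ n i) w) : x = 0 := by
  have : wIdeal K e (fun i => p ^ n i) w ≤ ⊥ := by
    refine Ideal.span_le.2 ?_
    rintro _ ⟨k, hk, rfl⟩
    have hpp : 0 < p := (Fact.out : p.Prime).pos
    obtain ⟨i, hi⟩ : ∃ i, p ^ n i ≤ k i := by
      by_contra! hcon
      refine absurd (hw.trans_le hk) (not_lt.2 (sum_le_sum fun i _ => ?_))
      have h1 : (k i : ℝ) + 1 ≤ (p ^ n i : ℕ) := by exact_mod_cast hcon i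
      have h2 : (0 : ℝ) < (p ^ n i : ℕ) := by exact_mod_cast pow_pos hpp _
      rw [div_le_iff₀ h2, sub_mul, inv_mul_cancel₀ h2.ne']; linarith
    refine prod_eq_zero (mem_univ i) ?_
    obtain ⟨c, hc⟩ := Nat.exists_eq_add_of_le hi
    rw [hc, pow_add, one_sub_single_pow, he, ← AddMonoidAlgebra.one_def, sub_self, zero_mul]
  simpa using this hx

lemma wIdeal_add_mem (e : ι → H) (N : ι → ℕ) {w : ℝ} {g h : H}
    (hg : 1 - AddMonoidAlgebra.single g (1 : K) ∈ wIdeal K e N w)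
    (hh : 1 - AddMonoidAlgebra.single h (1 : K) ∈ wIdeal K e N w) :
    1 - AddMonoidAlgebra.single (g + h) (1 : K) ∈ wIdeal K e N w := by
  have : 1 - AddMonoidAlgebra.single (g + h) (1 : K) = (1 - AddMonoidAlgebra.single g (1 : K))
      + AddMonoidAlgebra.single g (1 : K) * (1 - AddMonoidAlgebra.single h (1 : K)) := by
    rw [mul_sub, AddMonoidAlgebra.single_mul_single]; simp
  rw [this]
  exact add_mem hg (Ideal.mul_mem_left _ _ hh)

lemma wIdeal_zero_mem (e : ι → H) (N : ι → ℕ) (w : ℝ) :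
    1 - AddMonoidAlgebra.single (0 : H) (1 : K) ∈ wIdeal K e N w := by
  rw [← AddMonoidAlgebra.one_def, sub_self]; exact zero_mem _

lemma wIdeal_nsmul_mem (e : ι → H) (N : ι → ℕ) {w : ℝ} {g : H}
    (hg : 1 - AddMonoidAlgebra.single g (1 : K) ∈ wIdeal K e N w) (t : ℕ) :
    1 - AddMonoidAlgebra.single (t • g) (1 : K) ∈ wIdeal K e N w := by
  induction t with
  | zero => rw [zero_smul]; exact wIdeal_zero_mem e N w
  | succ t ih => rw [succ_nsmul]; exact wIdeal_add_mem e N ih hg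

lemma wIdeal_sum_mem (e : ι → H) (N : ι → ℕ) {w : ℝ} (f : ι → H)
    (hg : ∀ i, 1 - AddMonoidAlgebra.single (f i) (1 : K) ∈ wIdeal K e N w) :
    1 - AddMonoidAlgebra.single (∑ i, f i) (1 : K) ∈ wIdeal K e N w := by
  classical
  induction (univ : Finset ι) using Finset.induction_on with
  | empty => rw [sum_empty]; exact wIdeal_zero_mem e N w
  | insert a s ha ih => rw [sum_insert ha]; exact wIdeal_add_mem e N (hg a) ih

lemma decomp (p : ℕ) (hpp : p.Prime) [DecidableEq ι] (n : ι → ℕ)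
    (φ : H ≃+ ((i : ι) → ZMod (p ^ n i))) (h : H) :
    h = ∑ i, (φ h i).val • φ.symm (Pi.single i 1) := by
  apply φ.injective
  rw [map_sum]
  ext j
  rw [Finset.sum_apply, Finset.sum_eq_single j]
  · have : NeZero (p ^ n j) := ⟨(pow_pos hpp.pos _).ne'⟩
    rw [map_nsmul, AddEquiv.apply_symm_apply, Pi.smul_apply, Pi.single_eq_same, nsmul_eq_mul,
      mul_one, ZMod.natCast_zmod_val]
  · intro i _ hij
    rw [map_nsmul, AddEquiv.apply_symm_apply, Pi.smul_apply, Pi.single_eq_of_ne hij.symm,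
      smul_zero]
  · intro hj; exact absurd (mem_univ j) hj

lemma decomp_dvd (p : ℕ) (hpp : p.Prime) (n : ι → ℕ)
    (φ : H ≃+ ((i : ι) → ZMod (p ^ n i))) (h : H) (a : ℕ) (ha : addOrderOf h = p ^ a) (i : ι) :
    p ^ (n i - a) ∣ (φ h i).val := by
  have : NeZero (p ^ n i) := ⟨(pow_pos hpp.pos _).ne'⟩
  have hdiv : p ^ n i ∣ p ^ a * (φ h i).val := by
    have h0 : p ^ a • h = 0 := by rw [← ha]; exact addOrderOf_nsmul_eq_zero h
    have h1 : p ^ a • φ h i = 0 := by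
      have := congrFun (congrArg φ h0) i
      rwa [map_nsmul, map_zero, Pi.smul_apply, Pi.zero_apply] at this
    rw [← ZMod.natCast_eq_zero_iff, Nat.cast_mul, ZMod.natCast_zmod_val, ← nsmul_eq_mul]
    exact h1
  rcases le_total (n i) a with hle | hle
  · rw [Nat.sub_eq_zero_of_le hle, pow_zero]; exact one_dvd _
  · have h3 : p ^ n i = p ^ a * p ^ (n i - a) := by rw [← pow_add]; congr 1; omega
    replace hdiv := h3.symm.dvd.trans hdiv
    exact Nat.dvd_of_mul_dvd_mul_left (pow_pos hpp.pos _) hdiv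

lemma one_sub_single_mem (p : ℕ) [Fact p.Prime] [CharP K p] [DecidableEq ι] (n : ι → ℕ)
    (φ : H ≃+ ((i : ι) → ZMod (p ^ n i))) (hH : ∃ n : ℕ, Nat.card H = p ^ n) (h : H) :
    1 - AddMonoidAlgebra.single h (1 : K) ∈
      wIdeal K (fun i => φ.symm (Pi.single i 1)) (fun i => p ^ n i) ((addOrderOf h : ℝ))⁻¹ := by
  have hpp : p.Prime := Fact.out
  obtain ⟨M, hM⟩ := hH
  obtain ⟨a, -, ha⟩ := (Nat.dvd_prime_pow hpp).1 (hM ▸ addOrderOf_dvd_natCard h)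
  have h1 : AddMonoidAlgebra.single h (1 : K) = AddMonoidAlgebra.single
      (∑ i, (φ h i).val • φ.symm (Pi.single i 1)) (1 : K) :=
    congrArg (fun x => AddMonoidAlgebra.single x (1 : K)) (decomp p hpp n φ h)
  rw [h1]
  refine wIdeal_sum_mem _ _ _ fun i => ?_
  obtain ⟨t, ht⟩ := decomp_dvd p hpp n φ h a ha i
  rw [ht, mul_comm, mul_smul]
  refine wIdeal_nsmul_mem _ _ ?_ t
  rw [← one_sub_single_pow]
  refine Ideal.subset_span ⟨Pi.single i (p ^ (n i - a)), ?_, ?_⟩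
  · rw [Finset.sum_eq_single i]
    · rw [ha]
      simp only [Pi.single_eq_same]
      have hp0 : (0 : ℝ) < p := by exact_mod_cast hpp.pos
      push_cast
      rw [inv_eq_one_div, div_le_div_iff₀ (by positivity) (by positivity), one_mul, ← pow_add]
      exact pow_le_pow_right₀ (by exact_mod_cast hpp.one_le) (by omega)
    · intro j _ hj; simp [Pi.single_eq_of_ne hj]
    · simp
  · rw [Finset.prod_eq_single i]
    · simp
    · intro j _ hj; simp [Pi.single_eq_of_ne hj]
    · simp

end PartA

section PartB

variable {K : Type*} [Field K] {H : Type*} [AddCommGroup H] {N : ℕ} [NeZero N]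

/-- The product of twisted factors at the character `j`. -/
noncomputable def twProd (ψ : AddChar (ZMod N) K) (L : List ((H × ZMod N) × ZMod N))
    (j : ZMod N) : AddMonoidAlgebra K H :=
  (L.map fun x => 1 - AddMonoidAlgebra.single x.1.1 (ψ ((j - x.2) * x.1.2))).prod

lemma twProd_cons_coeff (ψ : AddChar (ZMod N) K) (x : (H × ZMod N) × ZMod N)
    (L : List ((H × ZMod N) × ZMod N)) (j : ZMod N) (h : H) :
    (twProd ψ (x :: L) j).coeff h = (twProd ψ L j).coeff h
      - ψ ((j - x.2) * x.1.2) * (twProd ψ L j).coeff (-x.1.1 + h) := by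
  simp [twProd, sub_mul, AddMonoidAlgebra.coeff_single_mul_apply]

lemma twProd_sum_zero (ψ : AddChar (ZMod N) K) (hψ : ψ.IsPrimitive)
    (L : List ((H × ZMod N) × ZMod N)) : ∀ (g : H × ZMod N),
    (∀ T : Multiset (H × ZMod N), T ≤ ((L.map Prod.fst : List _) : Multiset _) →
      g + T.sum ≠ 0) →
    ∑ j, ψ (j * g.2) * (twProd ψ L j).coeff (-g.1) = 0 := by
  induction L with
  | nil =>
    intro g hg
    have h0 := hg 0 (by simp)
    simp only [Multiset.sum_zero, add_zero] at h0
    by_cases h1 : g.1 = 0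
    · have h2 : g.2 ≠ 0 := fun h => h0 (Prod.ext h1 h)
      change ∑ j, ψ (j * g.2) * (1 : AddMonoidAlgebra K H).coeff (-g.1) = 0
      rw [← Finset.sum_mul, AddChar.sum_mulShift _ hψ, if_neg h2]; simp
    · refine Finset.sum_eq_zero fun j _ => ?_
      have : -g.1 ≠ 0 := by simpa using h1
      simp [twProd, AddMonoidAlgebra.one_def, AddMonoidAlgebra.coeff_single,
        Finsupp.single_apply, h1]
  | cons x L ih =>
    intro g hg
    simp only [twProd_cons_coeff, mul_sub, Finset.sum_sub_distrib]
    rw [ih g fun T hT => hg T (hT.trans (by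
      rw [List.map_cons, ← Multiset.cons_coe]; exact Multiset.le_cons_self _ _))]
    have h2 := ih (g + x.1) fun T hT => by
      have := hg (x.1 ::ₘ T) (by
        rw [List.map_cons, ← Multiset.cons_coe]; exact Multiset.cons_le_cons _ hT)
      simpa [add_assoc] using this
    have h3 : ∀ j : ZMod N, ψ (j * g.2) * (ψ ((j - x.2) * x.1.2) *
        (twProd ψ L j).coeff (-x.1.1 + -g.1)) = ψ (-(x.2 * x.1.2)) *
        (ψ (j * (g + x.1).2) * (twProd ψ L j).coeff (-(g + x.1).1)) := by
      intro j
      rw [← mul_assoc, ← mul_assoc, ← AddChar.map_add_eq_mul, ← AddChar.map_add_eq_mul]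
      congr 2
      · simp only [Prod.snd_add]; ring
      · simp only [Prod.fst_add]; abel
    simp only [h3, ← Finset.mul_sum, h2]; simp

lemma twProd_sum (ψ : AddChar (ZMod N) K) (hψ : ψ.IsPrimitive)
    (L : List ((H × ZMod N) × ZMod N))
    (hL : IsZeroSumFree ((L.map Prod.fst : List _) : Multiset (H × ZMod N))) :
    ∑ j, (twProd ψ L j).coeff 0 = N := by
  induction L with
  | nil => simp [twProd, AddMonoidAlgebra.one_def, AddMonoidAlgebra.coeff_single]
  | cons x L ih =>
    simp only [twProd_cons_coeff, Finset.sum_sub_distrib]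
    rw [ih fun T hT => hL T (hT.trans (by
      rw [List.map_cons, ← Multiset.cons_coe]; exact Multiset.le_cons_self _ _))]
    have h2 := twProd_sum_zero ψ hψ L x.1 fun T hT => by
      have := hL (x.1 ::ₘ T) (by
        rw [List.map_cons, ← Multiset.cons_coe]; exact Multiset.cons_le_cons _ hT) (by simp)
      simpa using this
    have h3 : ∀ j : ZMod N, ψ ((j - x.2) * x.1.2) * (twProd ψ L j).coeff (-x.1.1 + 0)
        = ψ (-(x.2 * x.1.2)) * (ψ (j * x.1.2) * (twProd ψ L j).coeff (-x.1.1)) := by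
      intro j
      rw [← mul_assoc, ← AddChar.map_add_eq_mul, add_zero]
      congr 2; ring
    simp only [h3, ← Finset.mul_sum, h2]; simp

/-- The load on the character `j`. -/
noncomputable def load (L : List ((H × ZMod N) × ZMod N)) (j : ZMod N) : ℝ :=
  (L.map fun x => if (j - x.2) * x.1.2 = 0 then ((addOrderOf x.1.1 : ℝ))⁻¹ else 0).sum

lemma twProd_mem {ι : Type*} [Fintype ι] (e : ι → H) (n : ι → ℕ)
    (he : ∀ h : H, 1 - AddMonoidAlgebra.single h (1 : K) ∈ wIdeal K e n ((addOrderOf h : ℝ))⁻¹)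
    (ψ : AddChar (ZMod N) K) (L : List ((H × ZMod N) × ZMod N)) (j : ZMod N) :
    twProd ψ L j ∈ wIdeal K e n (load L j) := by
  induction L with
  | nil => simpa [load] using wIdeal_zero e n _
  | cons x L ih =>
    simp only [twProd, load, List.map_cons, List.prod_cons, List.sum_cons]
    refine wIdeal_mul e n ?_ ih
    split_ifs with h
    · rw [h, AddChar.map_zero_eq_one]; exact he _
    · exact wIdeal_zero e n _

lemma mul_eq_zero_iff_dvd (x c : ZMod N) : x * c = 0 ↔ addOrderOf c ∣ x.val := by
  rw [addOrderOf_dvd_iff_nsmul_eq_zero, nsmul_eq_mul, ZMod.natCast_zmod_val]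

lemma load_nonneg_term (x : (H × ZMod N) × ZMod N) (j : ZMod N) :
    0 ≤ (if (j - x.2) * x.1.2 = 0 then ((addOrderOf x.1.1 : ℝ))⁻¹ else 0) := by
  split_ifs <;> positivity

lemma greedy (κ : ℝ) (hκ : 0 ≤ κ) (l : List (H × ZMod N))
    (hl : l.Pairwise fun a b => addOrderOf b.2 ∣ addOrderOf a.2) :
    (∃ L : List ((H × ZMod N) × ZMod N), L.map Prod.fst = l ∧ ∀ j, κ < load L j) ∨
    (∃ L : List ((H × ZMod N) × ZMod N), L.map Prod.fst = l ∧ ∀ j, load L j ≤ κ + 1) := by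
  induction l with
  | nil => right; exact ⟨[], rfl, fun j => by simp [load]; linarith⟩
  | cons a l ih =>
    rw [List.pairwise_cons] at hl
    rcases ih hl.2 with ⟨L, hL, h⟩ | ⟨L, hL, h⟩
    · left
      refine ⟨(a, 0) :: L, by simp [hL], fun j => (h j).trans_le ?_⟩
      have := load_nonneg_term (a, 0) j
      simp only [load, List.map_cons, List.sum_cons] at this ⊢
      linarith
    · by_cases hall : ∀ j, κ < load L j
      · left
        refine ⟨(a, 0) :: L, by simp [hL], fun j => (hall j).trans_le ?_⟩
        have := load_nonneg_term (a, 0) j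
        simp only [load, List.map_cons, List.sum_cons] at this ⊢
        linarith
      · right
        push Not at hall
        obtain ⟨j0, hj0⟩ := hall
        refine ⟨(a, j0) :: L, by simp [hL], fun j => ?_⟩
        have hc : load ((a, j0) :: L) j =
          (if (j - j0) * a.2 = 0 then ((addOrderOf a.1 : ℝ))⁻¹ else 0) + load L j := by
          simp [load]
        rw [hc]
        split_ifs with hz
        · have heq : load L j = load L j0 := by
            unfold load
            congr 1
            refine List.map_congr_left fun x hx => ?_
            have h1 : (j - j0) * x.1.2 = 0 := by
              rw [mul_eq_zero_iff_dvd] at hz ⊢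
              exact (hl.1 x.1 (hL ▸ List.mem_map_of_mem hx)).trans hz
            have h2 : (j - x.2) * x.1.2 = (j0 - x.2) * x.1.2 := by linear_combination h1
            rw [h2]
          have h1 : ((addOrderOf a.1 : ℝ))⁻¹ ≤ 1 := Nat.cast_inv_le_one _
          linarith
        · simpa using h j

lemma card_le (c : ZMod N) (s : ZMod N) :
    (N : ℝ) * ((addOrderOf c : ℝ))⁻¹ ≤ ∑ j : ZMod N, if (j - s) * c = 0 then (1 : ℝ) else 0 := by
  have h1 : (∑ j : ZMod N, if (j - s) * c = 0 then (1 : ℝ) else 0)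
      = ∑ j : ZMod N, if j * c = 0 then (1 : ℝ) else 0 :=
    Fintype.sum_equiv (Equiv.subRight s) _ _ (fun j => by simp)
  rw [h1, Finset.sum_boole]
  let f : ZMod N →+ ZMod N := AddMonoidHom.mulRight c
  have hk : #{x : ZMod N | x * c = 0} = Nat.card f.ker := by
    rw [Nat.card_eq_fintype_card, ← Finset.card_attach]
    simp only [Finset.card_attach]
    rw [← Fintype.card_coe]
    exact Fintype.card_congr (Equiv.subtypeEquivRight fun x => by simp [f, AddMonoidHom.mem_ker])
  have hr : Nat.card f.range = addOrderOf c := by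
    rw [← Nat.card_zmultiples]
    congr 2
    ext y
    simp only [f, AddMonoidHom.mem_range, AddMonoidHom.coe_mulRight,
      AddSubgroup.mem_zmultiples_iff]
    constructor
    · rintro ⟨x, rfl⟩; exact ⟨x.val, by simp⟩
    · rintro ⟨k, rfl⟩; exact ⟨k, by simp⟩
  have hcard : Nat.card f.ker * Nat.card f.range = N := by
    rw [← AddSubgroup.index_ker, AddSubgroup.card_mul_index, Nat.card_zmod]
  have h0 : 0 < addOrderOf c := addOrderOf_pos c
  rw [hk, ← div_eq_mul_inv, div_le_iff₀ (by exact_mod_cast h0)]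
  rw [hr] at hcard
  exact_mod_cast hcard.ge

lemma sum_load (L : List ((H × ZMod N) × ZMod N))
    (hco : ∀ g : H × ZMod N, addOrderOf g = addOrderOf g.1 * addOrderOf g.2) :
    N * crossNum ((L.map Prod.fst : List _) : Multiset (H × ZMod N)) ≤ ∑ j, load L j := by
  induction L with
  | nil => simp [crossNum, load]
  | cons x L ih =>
    have hc : ∀ j, load (x :: L) j =
      ((addOrderOf x.1.1 : ℝ))⁻¹ * (if (j - x.2) * x.1.2 = 0 then 1 else 0) + load L j := by
      intro j; simp [load]
    have h1 : crossNum (((x :: L).map Prod.fst : List _) : Multiset (H × ZMod N))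
        = ((addOrderOf x.1 : ℝ))⁻¹ + crossNum ((L.map Prod.fst : List _) : Multiset (H × ZMod N)) := by
      simp [crossNum]
    simp only [hc, Finset.sum_add_distrib, ← Finset.mul_sum]
    rw [h1, mul_add, hco]
    have := card_le x.1.2 x.2
    have h3 := mul_le_mul_of_nonneg_left this (a := ((addOrderOf x.1.1 : ℝ))⁻¹) (by positivity)
    push_cast
    rw [mul_inv]
    linarith

end PartB

lemma upper_bound (p q : ℕ) [Fact p.Prime] (hq : q.Prime) (hpq : p ≠ q)
    {H : Type*} [AddCommGroup H] (hH : ∃ n : ℕ, Nat.card H = p ^ n)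
    {ι : Type*} [Fintype ι] [DecidableEq ι] (n : ι → ℕ) (φ : H ≃+ ((i : ι) → ZMod (p ^ n i)))
    (m : ℕ) (S : Multiset (H × ZMod (q ^ m))) (hS : IsZeroSumFree S) :
    crossNum S ≤ ∑ i, (1 - ((p ^ n i : ℕ) : ℝ)⁻¹) + 1 - ((q : ℝ) ^ m)⁻¹ := by
  classical
  have hpp : p.Prime := Fact.out
  set κ : ℝ := ∑ i, (1 - ((p ^ n i : ℕ) : ℝ)⁻¹) with hκdef
  have hκ : 0 ≤ κ := Finset.sum_nonneg fun i _ => sub_nonneg.2 (Nat.cast_inv_le_one _)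
  have : NeZero (q ^ m) := ⟨(pow_pos hq.pos _).ne'⟩
  have hcop : Nat.Coprime p q := (Nat.coprime_primes hpp hq).2 hpq
  let K := AlgebraicClosure (ZMod p)
  have hchar : CharP K p := charP_of_injective_algebraMap (algebraMap (ZMod p) K).injective p
  have hNK : ((q ^ m : ℕ) : K) ≠ 0 := by
    rw [Ne, CharP.cast_eq_zero_iff K p]
    intro h
    exact hpq ((Nat.prime_dvd_prime_iff_eq hpp hq).1 (hpp.dvd_of_dvd_pow h))
  have : NeZero ((q ^ m : ℕ) : K) := ⟨hNK⟩
  have := IsSepClosed.hasEnoughRootsOfUnity K (q ^ m)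
  obtain ⟨ζ, hζ⟩ := HasEnoughRootsOfUnity.exists_primitiveRoot K (q ^ m)
  have hψ := AddChar.zmodChar_primitive_of_primitive_root (q ^ m) hζ
  set ψ := AddChar.zmodChar (q ^ m) hζ.pow_eq_one
  obtain ⟨M, hM⟩ := hH
  have hordc : ∀ c : ZMod (q ^ m), ∃ b, addOrderOf c = q ^ b := fun c => by
    have h := addOrderOf_dvd_natCard c
    rw [Nat.card_zmod] at h
    obtain ⟨b, -, hb⟩ := (Nat.dvd_prime_pow hq).1 h
    exact ⟨b, hb⟩
  have hco : ∀ g : H × ZMod (q ^ m), addOrderOf g = addOrderOf g.1 * addOrderOf g.2 := by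
    intro g
    rw [Prod.addOrderOf]
    refine Nat.Coprime.lcm_eq_mul ?_
    obtain ⟨a, -, ha⟩ := (Nat.dvd_prime_pow hpp).1 (hM ▸ addOrderOf_dvd_natCard g.1)
    obtain ⟨b, hb⟩ := hordc g.2
    rw [ha, hb]
    exact Nat.Coprime.pow _ _ hcop
  let r : H × ZMod (q ^ m) → H × ZMod (q ^ m) → Prop := fun a b => addOrderOf b.2 ∣ addOrderOf a.2
  have : Std.Total r := ⟨fun a b => by
    obtain ⟨s, hs⟩ := hordc a.2
    obtain ⟨t, ht⟩ := hordc b.2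
    simp only [r, hs, ht]
    rcases le_total s t with h | h
    · right; exact pow_dvd_pow _ h
    · left; exact pow_dvd_pow _ h⟩
  have : IsTrans _ r := ⟨fun a b c h1 h2 => dvd_trans h2 h1⟩
  have hpw := List.pairwise_insertionSort r S.toList
  have hSl : ((List.insertionSort r S.toList : List _) : Multiset _) = S := by
    rw [Multiset.coe_eq_coe.2 (List.perm_insertionSort r S.toList), Multiset.coe_toList]
  have hNpos : (0 : ℝ) < (q ^ m : ℕ) := by exact_mod_cast pow_pos hq.pos m
  -- no full cover
  have hno : ∀ L : List ((H × ZMod (q ^ m)) × ZMod (q ^ m)),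
      L.map Prod.fst = List.insertionSort r S.toList → ∃ j, load L j ≤ κ := by
    intro L hL
    by_contra! hcon
    have h1 := twProd_sum ψ hψ L (by rw [hL, hSl]; exact hS)
    rw [Finset.sum_eq_zero] at h1
    · exact hNK h1.symm
    · intro j _
      have := wIdeal_eq_zero p _ n ?_ (hcon j)
        (twProd_mem _ _ (one_sub_single_mem p n φ ⟨M, hM⟩) ψ L j)
      · rw [this]; simp
      · intro i
        apply φ.injective
        rw [map_nsmul, AddEquiv.apply_symm_apply, map_zero]
        have h5 : p ^ n i • (1 : ZMod (p ^ n i)) = 0 := by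
          rw [nsmul_one]; exact ZMod.natCast_self _
        ext j
        by_cases hj : j = i
        · subst hj
          rw [Pi.smul_apply, Pi.single_eq_same, h5]; rfl
        · rw [Pi.smul_apply, Pi.single_eq_of_ne hj, smul_zero]; rfl
  rcases greedy κ hκ _ hpw with ⟨L, hL, h⟩ | ⟨L, hL, h⟩
  · obtain ⟨j, hj⟩ := hno L hL
    exact absurd (h j) (not_lt.2 hj)
  · obtain ⟨j0, hj0⟩ := hno L hL
    have h1 := sum_load L hco
    rw [hL, hSl] at h1
    have h2 : ∑ j, load L j ≤ (q ^ m : ℕ) * (κ + 1) - 1 := by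
      have h3 : ∑ j, load L j ≤ ∑ j, ((κ + 1) - if j = j0 then 1 else 0) := by
        refine Finset.sum_le_sum fun j _ => ?_
        split_ifs with hj
        · subst hj; linarith
        · simpa using h j
      refine h3.trans (le_of_eq ?_)
      rw [Finset.sum_sub_distrib]
      simp [ZMod.card]; ring
    have h4 : crossNum S ≤ (((q ^ m : ℕ) : ℝ) * (κ + 1) - 1) / (q ^ m : ℕ) := by
      rw [le_div_iff₀ hNpos, mul_comm]; linarith
    refine h4.trans (le_of_eq ?_)
    push_cast at hNpos ⊢
    field_simp

lemma le_add_split {α : Type*} {T A B : Multiset α} (h : T ≤ A + B) :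
    ∃ T1 T2, T1 ≤ A ∧ T2 ≤ B ∧ T = T1 + T2 := by
  classical
  refine ⟨T ∩ A, T - A, Multiset.inter_le_right, tsub_le_iff_left.2 h, ?_⟩
  ext a
  simp only [Multiset.count_add, Multiset.count_inter, Multiset.count_sub]
  omega

lemma zsf_map_inl {H : Type*} [AddCommGroup H] (N : ℕ) (S : Multiset H) (hS : IsZeroSumFree S) :
    IsZeroSumFree (S.map fun h => ((h, 0) : H × ZMod N)) := by
  intro T hT hT0 hs
  have h1 : T.map Prod.fst ≤ S := by
    have := Multiset.map_le_map (f := Prod.fst) hT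
    simpa using this
  refine hS _ h1 (by simpa using hT0) ?_
  have := congrArg (AddMonoidHom.fst H (ZMod N)) hs
  rw [map_multiset_sum] at this
  simpa using this

lemma crossNum_map_inl {H : Type*} [AddCommGroup H] (N : ℕ) (S : Multiset H) :
    crossNum (S.map fun h => ((h, 0) : H × ZMod N)) = crossNum S := by
  simp [crossNum, Multiset.map_map, Prod.addOrderOf]

lemma lower_G {H : Type*} [AddCommGroup H] (N : ℕ) (hN : 0 < N) (S : Multiset H)
    (hS : IsZeroSumFree S) :
    ∃ S' : Multiset (H × ZMod N), IsZeroSumFree S' ∧ crossNum S' = crossNum S + 1 - (N : ℝ)⁻¹ := by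
  refine ⟨(S.map fun h => (h, 0)) + Multiset.replicate (N - 1) (0, 1), ?_, ?_⟩
  · intro T hT hT0 hs
    obtain ⟨T1, T2, h1, h2, rfl⟩ := le_add_split hT
    obtain ⟨k, hk, rfl⟩ := Multiset.le_replicate_iff.1 h2
    have h3 : (T1.map Prod.snd).sum = 0 := by
      refine Multiset.sum_eq_zero fun x hx => ?_
      obtain ⟨y, hy, rfl⟩ := Multiset.mem_map.1 hx
      obtain ⟨z, -, rfl⟩ := Multiset.mem_map.1 (Multiset.mem_of_le h1 hy)
      rfl
    have h4 : ((k : ℕ) : ZMod N) = 0 := by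
      have := congrArg (AddMonoidHom.snd H (ZMod N)) hs
      rw [map_multiset_sum, Multiset.map_add, Multiset.sum_add] at this
      have h5 : (Multiset.map (AddMonoidHom.snd H (ZMod N)) T1).sum = 0 := h3
      rw [h5] at this
      simpa using this
    rw [ZMod.natCast_eq_zero_iff] at h4
    have hk0 : k = 0 := Nat.eq_zero_of_dvd_of_lt h4 (by omega)
    subst hk0
    simp only [Multiset.replicate_zero, add_zero] at hT0 hs
    exact zsf_map_inl N S hS T1 h1 hT0 hs
  · have h1 := crossNum_map_inl N S
    unfold crossNum at h1 ⊢
    rw [Multiset.map_add, Multiset.sum_add, h1]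
    have hN' : (N : ℝ) ≠ 0 := by exact_mod_cast hN.ne'
    simp only [Multiset.map_replicate, Multiset.sum_replicate, Prod.addOrderOf, addOrderOf_zero,
      Nat.lcm_one_left, ZMod.addOrderOf_one, nsmul_eq_mul]
    rw [Nat.cast_sub hN]
    field_simp
    push_cast
    ring

lemma le_sum_replicate {H : Type*} [AddCommGroup H] {ι : Type*} [DecidableEq ι] (s : Finset ι)
    (e : ι → H) (N : ι → ℕ) (T : Multiset H)
    (hT : T ≤ ∑ i ∈ s, Multiset.replicate (N i) (e i)) :
    ∃ k : ι → ℕ, (∀ i, k i ≤ N i) ∧ T = ∑ i ∈ s, Multiset.replicate (k i) (e i) := by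
  induction s using Finset.induction_on generalizing T with
  | empty => exact ⟨fun _ => 0, by simp, by simpa using hT⟩
  | insert a s ha ih =>
    rw [Finset.sum_insert ha] at hT
    obtain ⟨T1, T2, h1, h2, rfl⟩ := le_add_split hT
    obtain ⟨k, hk, rfl⟩ := ih T2 h2
    obtain ⟨l, hl, rfl⟩ := Multiset.le_replicate_iff.1 h1
    refine ⟨Function.update k a l, fun i => ?_, ?_⟩
    · by_cases hi : i = a
      · subst hi; simpa using hl
      · simpa [hi] using hk i
    · rw [Finset.sum_insert ha]
      congr 1
      · simp
      · refine Finset.sum_congr rfl fun i hi => ?_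
        have : i ≠ a := fun h => ha (h ▸ hi)
        simp [this]

lemma lower_H (p : ℕ) (hp : p.Prime) {H : Type*} [AddCommGroup H] {ι : Type*} [Fintype ι]
    [DecidableEq ι] (n : ι → ℕ) (φ : H ≃+ ((i : ι) → ZMod (p ^ n i))) :
    ∃ S : Multiset H, IsZeroSumFree S ∧ crossNum S = ∑ i, (1 - ((p ^ n i : ℕ) : ℝ)⁻¹) := by
  have hpos : ∀ i, 0 < p ^ n i := fun i => pow_pos hp.pos _
  refine ⟨∑ i, Multiset.replicate (p ^ n i - 1) (φ.symm (Pi.single i 1)), ?_, ?_⟩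
  · intro T hT hT0 hs
    obtain ⟨k, hk, rfl⟩ := le_sum_replicate _ _ _ T hT
    apply hT0
    refine Finset.sum_eq_zero fun j _ => ?_
    have h1 : φ (∑ i, k i • φ.symm (Pi.single i 1)) j = 0 := by
      have h2 : (∑ i, Multiset.replicate (k i) (φ.symm (Pi.single i 1))).sum
          = ∑ i, k i • φ.symm (Pi.single i 1) := by
        rw [Multiset.sum_sum]; simp only [Multiset.sum_replicate]
      rw [← h2, hs, map_zero]; rfl
    rw [map_sum, Finset.sum_apply, Finset.sum_eq_single j] at h1
    · rw [map_nsmul, AddEquiv.apply_symm_apply, Pi.smul_apply, Pi.single_eq_same, nsmul_one,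
        ZMod.natCast_eq_zero_iff] at h1
      have h3 := hk j
      have h4 := hpos j
      rw [Nat.eq_zero_of_dvd_of_lt h1 (by omega), Multiset.replicate_zero]
    · intro i _ hij
      rw [map_nsmul, AddEquiv.apply_symm_apply, Pi.smul_apply, Pi.single_eq_of_ne hij.symm,
        smul_zero]
    · intro hj; exact absurd (mem_univ j) hj
  · have hord : ∀ i, addOrderOf (φ.symm (Pi.single i 1)) = p ^ n i := by
      intro i
      rw [AddEquiv.addOrderOf_eq]
      have h1 := addOrderOf_injective (AddMonoidHom.single (fun i => ZMod (p ^ n i)) i)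
        (Pi.single_injective (M := fun i => ZMod (p ^ n i)) i) 1
      rw [ZMod.addOrderOf_one] at h1
      exact h1
    unfold crossNum
    rw [← Multiset.coe_mapAddMonoidHom, map_sum, Multiset.sum_sum]
    refine Finset.sum_congr rfl fun i _ => ?_
    rw [Multiset.coe_mapAddMonoidHom, Multiset.map_replicate, Multiset.sum_replicate, hord,
      nsmul_eq_mul, Nat.cast_sub (hpos i), sub_mul, mul_inv_cancel₀, Nat.cast_one, one_mul]
    exact_mod_cast (hpos i).ne'


/-- For distinct primes `p, q`, a finite abelian `p`-group `H` and `m ≥ 1`: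
`k(H ⊕ C_{q^m}) = k(H) + 1 - 1/q^m`. -/
theorem littleK_pGroup_prod_zmod_q_pow
    (p q : ℕ) (hp : p.Prime) (hq : q.Prime) (hpq : p ≠ q)
    (H : Type*) [AddCommGroup H] [Finite H] (hH : ∃ n : ℕ, Nat.card H = p ^ n)
    (m : ℕ) (hm : 0 < m) :
    littleK (H × ZMod (q ^ m)) = littleK H + 1 - ((q : ℝ) ^ m)⁻¹ := by
  classical
  have : Fact p.Prime := ⟨hp⟩
  obtain ⟨M, hM⟩ := hH
  obtain ⟨ι, _, P, -, f, ⟨φ0⟩⟩ := AddCommGroup.equiv_directSum_zmod_of_finite H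
  have φ1 : H ≃+ ((i : ι) → ZMod (P i ^ f i)) := φ0.trans (DirectSum.addEquivProd _)
  have hex : ∀ i, ∃ k, P i ^ f i = p ^ k := by
    intro i
    have h1 : Nat.card H = ∏ i, P i ^ f i := by
      rw [Nat.card_congr φ1.toEquiv, Nat.card_pi]; simp
    have h2 : P i ^ f i ∣ p ^ M := by
      rw [← hM, h1]; exact Finset.dvd_prod_of_mem _ (Finset.mem_univ i)
    obtain ⟨k, -, hk⟩ := (Nat.dvd_prime_pow hp).1 h2
    exact ⟨k, hk⟩
  choose n hn using hex
  have φ : H ≃+ ((i : ι) → ZMod (p ^ n i)) := by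
    have h3 : (fun i => P i ^ f i) = fun i => p ^ n i := funext hn
    have h4 : ∀ a b : ι → ℕ, a = b → (H ≃+ ((i : ι) → ZMod (a i))) →
        Nonempty (H ≃+ ((i : ι) → ZMod (b i))) := by
      rintro a _ rfl h; exact ⟨h⟩
    exact (h4 _ _ h3 φ1).some
  have hG : ∀ m : ℕ, IsGreatest {x : ℝ | ∃ S : Multiset (H × ZMod (q ^ m)),
      IsZeroSumFree S ∧ crossNum S = x}
      (∑ i, (1 - ((p ^ n i : ℕ) : ℝ)⁻¹) + 1 - ((q : ℝ) ^ m)⁻¹) := by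
    intro m
    refine ⟨?_, ?_⟩
    · obtain ⟨S, hS, hk⟩ := lower_H p hp n φ
      have := lower_G (q ^ m) (pow_pos hq.pos m) S hS
      rw [hk] at this
      push_cast at this ⊢
      exact this
    · rintro _ ⟨S, hS, rfl⟩
      exact upper_bound p q hq hpq ⟨M, hM⟩ n φ m S hS
  have hHg : IsGreatest {x : ℝ | ∃ S : Multiset H, IsZeroSumFree S ∧ crossNum S = x}
      (∑ i, (1 - ((p ^ n i : ℕ) : ℝ)⁻¹)) := by
    refine ⟨lower_H p hp n φ, ?_⟩
    rintro _ ⟨S, hS, rfl⟩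
    have h1 := upper_bound p q hq hpq ⟨M, hM⟩ n φ 0 (S.map fun h => (h, 0)) (zsf_map_inl _ S hS)
    rw [crossNum_map_inl] at h1
    simpa using h1
  rw [littleK, littleK, (hG m).csSup_eq, hHg.csSup_eq]
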